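/- arXiv:1305.7212 — 2 statements merged into one kernel-verified Lean document; each statement's English description precedes it below -/
import Mathlib

section
/- There exists a density measure μ and a set A ⊆ ℕ with μ(A) > d̄(A), where d̄ denotes upper asymptotic density. Concretely, let A = ⋃_{i=1}^{∞} {2^{2^i}, …, 2·2^{2^i} − 1}, let ℱ be any free ultrafilter on ℕ containing the set {2^{2^i} : i ∈ ℕ}, let 2ℱ be the ultrafilter with base {2F : F ∈ ℱ}, and let μ(X) = 2·((2ℱ)-lim X(n)/n) − (ℱ-lim X(n)/n); then μ(A) = 1 while d̄(A) = 1/2. This answers van Douwen's question (whether μ(A) ≤ d̄(A) holds for every density measure) in the negative. -/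
open Filter Topology

/-- The counting function `A(n) = |A ∩ [1, n]|`, as a real number. -/
noncomputable def count (A : Set ℕ) (n : ℕ) : ℝ :=
  ((A ∩ Set.Icc 1 n).ncard : ℝ)

/-- `A ⊆ ℕ` has asymptotic density `a`, i.e. `A(n)/n → a`. -/
def HasDensity (A : Set ℕ) (a : ℝ) : Prop :=
  Filter.Tendsto (fun n : ℕ => count A n / n) Filter.atTop (nhds a)

/-- Membership of a permutation `π` of `ℕ` in the Lévy group `𝒢`:
`|{k : k ≤ n < π(k)}| / n → 0`. -/
def InLevyGroup (π : Equiv.Perm ℕ) : Prop :=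
  Filter.Tendsto
    (fun n : ℕ => (({k : ℕ | k ≤ n ∧ n < π k}.ncard : ℝ) / n))
    Filter.atTop (nhds 0)

/-- A finitely additive probability measure defined on all subsets of `ℕ`,
with values in `[0, 1]`. -/
def IsFAMeasure (μ : Set ℕ → ℝ) : Prop :=
  (∀ A : Set ℕ, 0 ≤ μ A) ∧ (∀ A : Set ℕ, μ A ≤ 1) ∧ μ Set.univ = 1 ∧
    ∀ A B : Set ℕ, Disjoint A B → μ (A ∪ B) = μ A + μ B

/-- A density measure: a finitely additive measure extending asymptotic density. -/
def IsDensityMeasure (μ : Set ℕ → ℝ) : Prop :=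
  IsFAMeasure μ ∧ ∀ (A : Set ℕ) (a : ℝ), HasDensity A a → μ A = a

/-- Statistical convergence of a real sequence `x` to `L`: for every `ε > 0`
the set `{n : |x n − L| ≥ ε}` has asymptotic density zero. -/
def StatTendsto (x : ℕ → ℝ) (L : ℝ) : Prop :=
  ∀ ε : ℝ, 0 < ε → HasDensity {n : ℕ | ε ≤ |x n - L|} 0

/-- The limit of a (bounded) real sequence along an ultrafilter on `ℕ`. -/
noncomputable def ulim (𝒰 : Ultrafilter ℕ) (x : ℕ → ℝ) : ℝ :=
  limUnder (𝒰 : Filter ℕ) x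

/-- The set `A = ⋃_{i=1}^∞ {2^(2^i), …, 2·2^(2^i) − 1}`. -/
def Aex : Set ℕ := {m : ℕ | ∃ i : ℕ, 1 ≤ i ∧ 2 ^ 2 ^ i ≤ m ∧ m < 2 * 2 ^ 2 ^ i}

/-- Blümlinger's density measure `μ(X) = 2·((2ℱ)-lim X(n)/n) − (ℱ-lim X(n)/n)`. -/
noncomputable def muEx (𝒰 𝒱 : Ultrafilter ℕ) (X : Set ℕ) : ℝ :=
  2 * ulim 𝒱 (fun n : ℕ => count X n / n) - ulim 𝒰 (fun n : ℕ => count X n / n)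

/-!
The combination `2·X(2n)/(2n) − X(n)/n` is the proportion of elements of `X` in the window
`(n, 2n]`. Hence `μ(X) = ℱ-lim |X ∩ (n, 2n]| / n`, which makes positivity, additivity and `μ ≤ 1`
evident, and `μ` extends asymptotic density because the window proportions of a set of density `a`
tend to `2a − a`. If `X` contains `[n, 2n)` for `ℱ`-many `n`, then `μ(X) = 1`. On the other hand,
if the blocks `[b, 2b)` are sparse, then `[1, n]` meets only its last block in a non-negligible
proportion, and that block fills at most half of `[1, n]`.
-/

section Counting

theorem count_univ (n : ℕ) : count Set.univ n = n := by
  simp [count]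

theorem hasDensity_univ : HasDensity Set.univ 1 := by
  refine tendsto_const_nhds.congr' ?_
  filter_upwards [eventually_ne_atTop 0] with n hn
  rw [count_univ, div_self (Nat.cast_ne_zero.2 hn)]

variable (X : Set ℕ)

theorem count_nonneg (n : ℕ) : 0 ≤ count X n := Nat.cast_nonneg _

theorem ncard_inter_Icc_le (m n : ℕ) : (X ∩ Set.Icc m n).ncard ≤ n + 1 - m :=
  (Set.ncard_le_ncard Set.inter_subset_right (Set.finite_Icc m n)).trans_eq (Set.ncard_Icc_nat m n)

theorem count_le (n : ℕ) : count X n ≤ n :=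
  Nat.cast_le.2 (ncard_inter_Icc_le X 1 n)

theorem count_div_mem_Icc (n : ℕ) : count X n / n ∈ Set.Icc (0 : ℝ) 1 :=
  ⟨div_nonneg (count_nonneg X n) n.cast_nonneg, div_le_one_of_le₀ (count_le X n) n.cast_nonneg⟩

theorem isBoundedUnder_le_count_div (l : Filter ℕ) :
    IsBoundedUnder (· ≤ ·) l fun n : ℕ => count X n / n :=
  isBoundedUnder_of ⟨1, fun n => (count_div_mem_Icc X n).2⟩

theorem isBoundedUnder_ge_count_div (l : Filter ℕ) :
    IsBoundedUnder (· ≥ ·) l fun n : ℕ => count X n / n :=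
  isBoundedUnder_of ⟨0, fun n => (count_div_mem_Icc X n).1⟩

theorem count_add_ncard_inter_Ioc {m n : ℕ} (h : m ≤ n) :
    count X m + (X ∩ Set.Ioc m n).ncard = count X n := by
  have hsplit : X ∩ Set.Icc 1 n = X ∩ Set.Icc 1 m ∪ X ∩ Set.Ioc m n := by
    rw [← Set.inter_union_distrib_left]
    congr 1
    ext k
    simp only [Set.mem_Icc, Set.mem_union, Set.mem_Ioc]
    omega
  have hdisj : Disjoint (X ∩ Set.Icc 1 m) (X ∩ Set.Ioc m n) :=
    (Set.disjoint_left.2 fun _ hk hk' => hk'.1.not_ge hk.2).mono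
      Set.inter_subset_right Set.inter_subset_right
  rw [count, count, hsplit, Set.ncard_union_eq hdisj, Nat.cast_add]

end Counting

section WindowDensity

/-- The proportion of elements of `X` in the window `(n, 2n]`; it is `0` at `n = 0`. -/
noncomputable def windowDensity (X : Set ℕ) (n : ℕ) : ℝ :=
  (X ∩ Set.Ioc n (2 * n)).ncard / n

variable {X Y : Set ℕ}

theorem windowDensity_nonneg (X : Set ℕ) (n : ℕ) : 0 ≤ windowDensity X n := by
  unfold windowDensity
  positivity

theorem windowDensity_le_one (X : Set ℕ) (n : ℕ) : windowDensity X n ≤ 1 := by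
  refine div_le_one_of_le₀ (Nat.cast_le.2 ?_) n.cast_nonneg
  calc (X ∩ Set.Ioc n (2 * n)).ncard
      ≤ (Set.Ioc n (2 * n)).ncard := Set.ncard_le_ncard Set.inter_subset_right
    _ = n := by rw [Set.ncard_Ioc_nat]; omega

theorem windowDensity_union (h : Disjoint X Y) (n : ℕ) :
    windowDensity (X ∪ Y) n = windowDensity X n + windowDensity Y n := by
  have hdisj : Disjoint (X ∩ Set.Ioc n (2 * n)) (Y ∩ Set.Ioc n (2 * n)) :=
    h.mono Set.inter_subset_left Set.inter_subset_left
  rw [windowDensity, Set.union_inter_distrib_right, Set.ncard_union_eq hdisj, Nat.cast_add,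
    add_div]
  rfl

theorem windowDensity_eq_sub (X : Set ℕ) (n : ℕ) :
    windowDensity X n = 2 * (count X (2 * n) / (2 * n : ℕ)) - count X n / n := by
  rw [windowDensity, ← count_add_ncard_inter_Ioc X (show n ≤ 2 * n by omega), Nat.cast_mul,
    Nat.cast_two, ← mul_div_assoc, mul_div_mul_left _ _ two_ne_zero]
  ring

theorem one_sub_inv_le_windowDensity {n : ℕ} (hn : n ≠ 0) (h : Set.Ioo n (2 * n) ⊆ X) :
    1 - (n : ℝ)⁻¹ ≤ windowDensity X n := by
  have hcard : n ≤ (X ∩ Set.Ioc n (2 * n)).ncard + 1 := by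
    have := Set.ncard_le_ncard (Set.subset_inter h Set.Ioo_subset_Ioc_self)
    rw [Set.ncard_Ioo_nat] at this
    omega
  have hcard' : (n : ℝ) ≤ (X ∩ Set.Ioc n (2 * n)).ncard + 1 := mod_cast hcard
  have hn' : (n : ℝ) ≠ 0 := Nat.cast_ne_zero.2 hn
  rw [windowDensity, le_div_iff₀ (by positivity), sub_mul, inv_mul_cancel₀ hn']
  linarith

theorem tendsto_two_mul_atTop : Tendsto (fun n : ℕ => 2 * n) atTop atTop :=
  tendsto_id.const_mul_atTop' two_pos

theorem HasDensity.tendsto_windowDensity {a : ℝ} (h : HasDensity X a) :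
    Tendsto (windowDensity X) atTop (𝓝 a) := by
  have hlim := ((h.comp tendsto_two_mul_atTop).const_mul 2).sub h
  rw [two_mul a, add_sub_cancel_right] at hlim
  exact hlim.congr fun n => (windowDensity_eq_sub X n).symm

end WindowDensity

section Measure

variable {𝒰 : Ultrafilter ℕ}

theorem tendsto_ulim {x : ℕ → ℝ} {K : Set ℝ} (hK : IsCompact K) (hx : ∀ᶠ n in 𝒰, x n ∈ K) :
    Tendsto x 𝒰 (𝓝 (ulim 𝒰 x)) := by
  obtain ⟨l, -, hl⟩ := hK.ultrafilter_le_nhds' (𝒰.map x) hx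
  exact tendsto_nhds_limUnder ⟨l, hl⟩

theorem tendsto_count_div_ulim (𝒰 : Ultrafilter ℕ) (X : Set ℕ) :
    Tendsto (fun n : ℕ => count X n / n) 𝒰 (𝓝 (ulim 𝒰 fun n => count X n / n)) :=
  tendsto_ulim isCompact_Icc (Eventually.of_forall (count_div_mem_Icc X))

theorem tendsto_windowDensity_muEx (𝒰 : Ultrafilter ℕ) (X : Set ℕ) :
    Tendsto (windowDensity X) 𝒰 (𝓝 (muEx 𝒰 (𝒰.map fun k => 2 * k) X)) := by
  have hdouble : Tendsto (fun n : ℕ => count X (2 * n) / (2 * n : ℕ)) 𝒰 _ :=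
    (tendsto_count_div_ulim (𝒰.map fun k => 2 * k) X).comp tendsto_map
  exact ((hdouble.const_mul 2).sub (tendsto_count_div_ulim 𝒰 X)).congr
    fun n => (windowDensity_eq_sub X n).symm

theorem muEx_eq_of_tendsto_windowDensity {X : Set ℕ} {a : ℝ}
    (h : Tendsto (windowDensity X) 𝒰 (𝓝 a)) : muEx 𝒰 (𝒰.map fun k => 2 * k) X = a :=
  tendsto_nhds_unique (tendsto_windowDensity_muEx 𝒰 X) h

theorem isDensityMeasure_muEx (h𝒰 : (𝒰 : Filter ℕ) ≤ atTop) :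
    IsDensityMeasure (muEx 𝒰 (𝒰.map fun k => 2 * k)) := by
  have hdensity (X : Set ℕ) (a : ℝ) (hX : HasDensity X a) :
      muEx 𝒰 (𝒰.map fun k => 2 * k) X = a :=
    muEx_eq_of_tendsto_windowDensity (hX.tendsto_windowDensity.mono_left h𝒰)
  refine ⟨⟨fun X => ?nonneg, fun X => ?le_one, hdensity _ _ hasDensity_univ,
    fun X Y hXY => ?union⟩, hdensity⟩
  case nonneg => exact ge_of_tendsto' (tendsto_windowDensity_muEx 𝒰 X) (windowDensity_nonneg X)
  case le_one => exact le_of_tendsto' (tendsto_windowDensity_muEx 𝒰 X) (windowDensity_le_one X)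
  case union =>
    exact muEx_eq_of_tendsto_windowDensity
      (((tendsto_windowDensity_muEx 𝒰 X).add (tendsto_windowDensity_muEx 𝒰 Y)).congr
        fun n => (windowDensity_union hXY n).symm)

theorem muEx_eq_one (h𝒰 : (𝒰 : Filter ℕ) ≤ atTop) {X : Set ℕ}
    (hX : ∀ᶠ n in 𝒰, Set.Ioo n (2 * n) ⊆ X) : muEx 𝒰 (𝒰.map fun k => 2 * k) X = 1 := by
  have hlower : Tendsto (fun n : ℕ => 1 - (n : ℝ)⁻¹) 𝒰 (𝓝 1) := by
    simpa using (tendsto_inv_atTop_nhds_zero_nat (𝕜 := ℝ)).const_sub 1 |>.mono_left h𝒰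
  refine muEx_eq_of_tendsto_windowDensity (tendsto_of_tendsto_of_tendsto_of_le_of_le' hlower
    tendsto_const_nhds ?_ (Eventually.of_forall (windowDensity_le_one X)))
  filter_upwards [hX, h𝒰 (eventually_ne_atTop 0)] with n hn hn₀
  exact one_sub_inv_le_windowDensity hn₀ hn

end Measure

section DoublingBlocks

/-- The union of the blocks `{a i, …, 2 * a i - 1}`. It generalizes `Aex`, which is the case
`a i = 2 ^ 2 ^ (i + 1)`: the index is shifted because the blocks of `Aex` start at `i = 1`. -/
def doublingBlocks (a : ℕ → ℕ) : Set ℕ := ⋃ i, Set.Ico (a i) (2 * a i)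

variable {a : ℕ → ℕ}

theorem Ico_subset_doublingBlocks (a : ℕ → ℕ) (i : ℕ) :
    Set.Ico (a i) (2 * a i) ⊆ doublingBlocks a :=
  Set.subset_iUnion (fun i => Set.Ico (a i) (2 * a i)) i

theorem doublingBlocks_inter_Icc_subset (ha : Monotone a) {j n : ℕ} (hn : n < a (j + 2)) :
    doublingBlocks a ∩ Set.Icc 1 n ⊆
      Set.Ico 1 (2 * a j) ∪ Set.Ico (a (j + 1)) (min (n + 1) (2 * a (j + 1))) := by
  rintro m ⟨hm, hm₁, hmn⟩
  obtain ⟨k, hkm, hmk⟩ := Set.mem_iUnion.1 hm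
  rcases lt_trichotomy k (j + 1) with hk | rfl | hk
  · have : a k ≤ a j := ha (by omega)
    exact Or.inl ⟨hm₁, by omega⟩
  · exact Or.inr ⟨hkm, lt_min (by omega) hmk⟩
  · have : a (j + 2) ≤ a k := ha hk
    omega

theorem two_mul_count_doublingBlocks_le (ha : Monotone a) {j n : ℕ} (hjn : a (j + 1) ≤ n)
    (hnj : n < a (j + 2)) : 2 * count (doublingBlocks a) n ≤ n + 4 * a j + 1 := by
  have hcard := (Set.ncard_le_ncard (doublingBlocks_inter_Icc_subset ha hnj)).trans
    (Set.ncard_union_le _ _)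
  rw [Set.ncard_Ico_nat, Set.ncard_Ico_nat] at hcard
  have hnat : 2 * (doublingBlocks a ∩ Set.Icc 1 n).ncard ≤ n + 4 * a j + 1 := by omega
  unfold count
  exact_mod_cast hnat

theorem exists_le_lt_succ_of_strictMono (ha : StrictMono a) {n : ℕ} (hn : a 0 ≤ n) :
    ∃ k, a k ≤ n ∧ n < a (k + 1) := by
  obtain ⟨k, hk, hk'⟩ :=
    ha.exists_between_of_tendsto_atTop ha.tendsto_atTop (Nat.lt_succ_of_le hn)
  exact ⟨k, Nat.le_of_lt_succ hk, hk'⟩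

theorem eventually_count_doublingBlocks_div_le (ha : StrictMono a)
    (hsparse : (fun i => (a i : ℝ)) =o[atTop] fun i => (a (i + 1) : ℝ)) {ε : ℝ} (hε : 0 < ε) :
    ∀ᶠ n : ℕ in atTop, count (doublingBlocks a) n / n ≤ 1 / 2 + ε := by
  obtain ⟨N, hN⟩ := eventually_atTop.1 (hsparse.bound (show 0 < ε / 4 by positivity))
  filter_upwards [eventually_ge_atTop (a (N + 1)), eventually_gt_atTop 0,
    tendsto_natCast_atTop_atTop.eventually_ge_atTop (1 / ε)] with n hNn hn hεn
  obtain ⟨k, hkn, hnk⟩ :=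
    exists_le_lt_succ_of_strictMono ha ((ha.monotone (Nat.zero_le _)).trans hNn)
  have hNk : N + 1 < k + 1 := ha.lt_iff_lt.1 (hNn.trans_lt hnk)
  obtain ⟨j, rfl⟩ : ∃ j, k = j + 1 := ⟨k - 1, by omega⟩
  have hearlier : (a j : ℝ) ≤ ε / 4 * n := by
    have hj := hN j (by omega)
    rw [Real.norm_natCast, Real.norm_natCast] at hj
    exact hj.trans (by gcongr)
  have hone : 1 ≤ ε * n := by rwa [div_le_iff₀' hε] at hεn
  rw [div_le_iff₀ (by positivity)]
  linarith [two_mul_count_doublingBlocks_le ha.monotone hkn hnk]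

theorem half_le_count_div_of_Ico_subset {X : Set ℕ} {b : ℕ} (hb : b ≠ 0)
    (h : Set.Ico b (2 * b) ⊆ X) : 1 / 2 ≤ count X (2 * b) / (2 * b : ℕ) := by
  have hsub : Set.Ico b (2 * b) ⊆ X ∩ Set.Icc 1 (2 * b) :=
    Set.subset_inter h fun m hm => ⟨(Nat.one_le_iff_ne_zero.2 hb).trans hm.1, hm.2.le⟩
  have hcard : b ≤ (X ∩ Set.Icc 1 (2 * b)).ncard := by
    have := Set.ncard_le_ncard hsub
    rw [Set.ncard_Ico_nat] at this
    omega
  have hcount : (b : ℝ) ≤ count X (2 * b) := Nat.cast_le.2 hcard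
  rw [le_div_iff₀ (by positivity)]
  push_cast
  linarith

theorem frequently_half_le_count_doublingBlocks_div (ha : Tendsto a atTop atTop) :
    ∃ᶠ n : ℕ in atTop, 1 / 2 ≤ count (doublingBlocks a) n / n := by
  refine (tendsto_two_mul_atTop.comp ha).frequently (Eventually.frequently ?_)
  filter_upwards [ha.eventually_ne_atTop 0] with i hi
  exact half_le_count_div_of_Ico_subset hi (Ico_subset_doublingBlocks a i)

theorem limsup_count_doublingBlocks_div (ha : StrictMono a)
    (hsparse : (fun i => (a i : ℝ)) =o[atTop] fun i => (a (i + 1) : ℝ)) :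
    limsup (fun n : ℕ => count (doublingBlocks a) n / n) atTop = 1 / 2 := by
  apply le_antisymm
  · exact le_of_forall_pos_le_add fun ε hε =>
      limsup_le_of_le (isBoundedUnder_ge_count_div _ _).isCoboundedUnder_le
        (eventually_count_doublingBlocks_div_le ha hsparse hε)
  · exact le_limsup_of_frequently_le
      (frequently_half_le_count_doublingBlocks_div ha.tendsto_atTop)
      (isBoundedUnder_le_count_div _ _)

end DoublingBlocks

theorem vanDouwen_question_counterexample_general {a : ℕ → ℕ} (ha : StrictMono a)
    (hsparse : (fun i => (a i : ℝ)) =o[atTop] fun i => (a (i + 1) : ℝ)) {𝒰 𝒱 : Ultrafilter ℕ}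
    (hfree : (𝒰 : Filter ℕ) ≤ cofinite) (hmem : Set.range a ∈ 𝒰)
    (h𝒱 : ∀ B : Set ℕ, B ∈ 𝒱 ↔ ∃ F ∈ 𝒰, (fun k : ℕ => 2 * k) '' F ⊆ B) :
    IsDensityMeasure (muEx 𝒰 𝒱) ∧
      muEx 𝒰 𝒱 (doublingBlocks a) = 1 ∧
      limsup (fun n : ℕ => count (doublingBlocks a) n / n) atTop = 1 / 2 ∧
      limsup (fun n : ℕ => count (doublingBlocks a) n / n) atTop <
        muEx 𝒰 𝒱 (doublingBlocks a) := by
  have h𝒰 : (𝒰 : Filter ℕ) ≤ atTop := Nat.cofinite_eq_atTop ▸ hfree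
  obtain rfl : 𝒱 = 𝒰.map fun k => 2 * k :=
    Ultrafilter.ext fun B => (h𝒱 B).trans mem_map_iff_exists_image.symm
  have hblocks : ∀ᶠ n in 𝒰, Set.Ioo n (2 * n) ⊆ doublingBlocks a := by
    filter_upwards [hmem]
    rintro _ ⟨i, rfl⟩
    exact Set.Ioo_subset_Ico_self.trans (Ico_subset_doublingBlocks a i)
  have hmu := muEx_eq_one h𝒰 hblocks
  have hlimsup := limsup_count_doublingBlocks_div ha hsparse
  refine ⟨isDensityMeasure_muEx h𝒰, hmu, hlimsup, ?_⟩
  rw [hlimsup, hmu]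
  exact one_half_lt_one

section TwoPowTwoPow

theorem strictMono_two_pow_two_pow : StrictMono fun i : ℕ => 2 ^ 2 ^ (i + 1) :=
  fun _ _ hij => Nat.pow_lt_pow_right one_lt_two
    (Nat.pow_lt_pow_right one_lt_two (Nat.succ_lt_succ hij))

theorem isLittleO_two_pow_two_pow :
    (fun i : ℕ => ((2 ^ 2 ^ (i + 1) : ℕ) : ℝ)) =o[atTop]
      fun i : ℕ => ((2 ^ 2 ^ (i + 1 + 1) : ℕ) : ℝ) := by
  have hsquare : (fun x : ℝ => x ^ 1) =o[atTop] fun x => x ^ 2 :=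
    Asymptotics.isLittleO_pow_pow_atTop_of_lt one_lt_two
  refine (hsquare.comp_tendsto (tendsto_natCast_atTop_atTop.comp
    strictMono_two_pow_two_pow.tendsto_atTop)).congr (fun i => pow_one _) fun i => ?_
  rw [Function.comp_apply, Function.comp_apply, pow_succ 2 (i + 1), pow_mul, ← Nat.cast_pow]

theorem setOf_exists_eq_two_pow_two_pow :
    {n : ℕ | ∃ i : ℕ, 1 ≤ i ∧ n = 2 ^ 2 ^ i} = Set.range fun i : ℕ => 2 ^ 2 ^ (i + 1) := by
  ext n
  constructor
  · rintro ⟨i, hi, rfl⟩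
    exact ⟨i - 1, by simp only [Nat.sub_add_cancel hi]⟩
  · rintro ⟨i, rfl⟩
    exact ⟨i + 1, i.succ_pos, rfl⟩

theorem Aex_eq_doublingBlocks : Aex = doublingBlocks fun i => 2 ^ 2 ^ (i + 1) := by
  ext m
  rw [doublingBlocks, Set.mem_iUnion]
  constructor
  · rintro ⟨i, hi, hm⟩
    exact ⟨i - 1, by simpa only [Nat.sub_add_cancel hi, Set.mem_Ico] using hm⟩
  · rintro ⟨i, hm⟩
    exact ⟨i + 1, i.succ_pos, hm⟩

end TwoPowTwoPow

/-- Counterexample to van Douwen's question: with `ℱ` a free ultrafilter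
containing `{2^(2^i) : i ≥ 1}` and `2ℱ` the ultrafilter with base
`{2F : F ∈ ℱ}`, the density measure `μ(X) = 2·((2ℱ)-lim X(n)/n) − (ℱ-lim X(n)/n)`
satisfies `μ(A) = 1` while the upper asymptotic density of `A` is `1/2`;
in particular `μ(A) > d̄(A)`. -/
theorem vanDouwen_question_counterexample (𝒰 𝒱 : Ultrafilter ℕ)
    (hfree : (𝒰 : Filter ℕ) ≤ Filter.cofinite)
    (hmem : {n : ℕ | ∃ i : ℕ, 1 ≤ i ∧ n = 2 ^ 2 ^ i} ∈ 𝒰)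
    (h𝒱 : ∀ B : Set ℕ, B ∈ 𝒱 ↔ ∃ F ∈ 𝒰, (fun k : ℕ => 2 * k) '' F ⊆ B) :
    IsDensityMeasure (muEx 𝒰 𝒱) ∧
      muEx 𝒰 𝒱 Aex = 1 ∧
      Filter.limsup (fun n : ℕ => count Aex n / n) Filter.atTop = 1 / 2 ∧
      Filter.limsup (fun n : ℕ => count Aex n / n) Filter.atTop < muEx 𝒰 𝒱 Aex := by
  rw [setOf_exists_eq_two_pow_two_pow] at hmem
  rw [Aex_eq_doublingBlocks]
  exact vanDouwen_question_counterexample_general strictMono_two_pow_two_pow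
    isLittleO_two_pow_two_pow hfree hmem h𝒱
end

section
/- There exist a density measure μ and sets A, B ⊆ ℕ with A(n) ≤ B(n) for all n ∈ ℕ, yet μ(A) > μ(B). (In general: if a density measure μ and a set A satisfy d̄(A) < μ(A), then choosing a set B having asymptotic density d(B) ∈ (d̄(A), μ(A)) and modifying finitely many elements yields such a monotonicity counterexample; this answers question (a) of Šalát and Tijdeman in the negative.) -/
open Filter Topology

/-!
Limits of the uniform probabilities on the windows `(2 * 3 ^ k, 3 ^ (k + 1)]` along a nonprincipal
ultrafilter form a density measure, because each window takes up a fixed proportion of the initial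
segment that it closes. This measure only sees the upper halves of the blocks
`(3 ^ k, 3 ^ (k + 1)]`: their union has measure one and the union of the lower halves has measure
zero, although translating every upper half down onto the lower half of its block can only increase
the counting function.
-/

open Asymptotics

section Count

lemma count_add_ncard_inter_Ioc_s17 (S : Set ℕ) {a b : ℕ} (hab : a ≤ b) :
    count S a + (S ∩ Set.Ioc a b).ncard = count S b := by
  have hIcc : Set.Icc 1 a ∪ Set.Ioc a b = Set.Icc 1 b := by
    ext n
    simp only [Set.mem_union, Set.mem_Icc, Set.mem_Ioc]
    omega
  have hdisj : Disjoint (Set.Icc 1 a) (Set.Ioc a b) :=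
    Set.disjoint_left.mpr fun _ h h' => h'.1.not_ge h.2
  rw [count, count, ← hIcc, Set.inter_union_distrib_left,
    Set.ncard_union_eq (hdisj.mono Set.inter_subset_right Set.inter_subset_right), Nat.cast_add]

lemma HasDensity.isLittleO {S : Set ℕ} {d : ℝ} (h : HasDensity S d) :
    (fun n : ℕ => count S n - d * n) =o[atTop] fun n : ℕ => (n : ℝ) := by
  have hne : ∀ᶠ n : ℕ in atTop, (n : ℝ) ≠ 0 :=
    (eventually_ne_atTop 0).mono fun _ => Nat.cast_ne_zero.mpr
  rw [isLittleO_iff_tendsto' (hne.mono fun _ hn h0 => absurd h0 hn)]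
  have hlim : Tendsto (fun n : ℕ => count S n / n - d) atTop (𝓝 0) := by
    simpa only [sub_self] using Tendsto.sub_const h d
  refine hlim.congr' (hne.mono fun n hn => ?_)
  field_simp

/-- Each `(b i, c i]` is translated down into `(a i, b i]`, which is at least as long. -/
lemma count_iUnion_Ioc_le {ι : Type*} {a b c : ι → ℕ} (hlen : ∀ i, c i + a i ≤ 2 * b i)
    (hdisj : Pairwise (Function.onFun Disjoint fun i => Set.Ioc (a i) (b i))) (n : ℕ) :
    count (⋃ i, Set.Ioc (b i) (c i)) n ≤ count (⋃ i, Set.Ioc (a i) (b i)) n := by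
  rcases isEmpty_or_nonempty ι with hι | hι
  · simp only [Set.iUnion_of_empty, le_refl]
  have hindex : ∀ x ∈ ⋃ i, Set.Ioc (b i) (c i), ∃ i, x ∈ Set.Ioc (b i) (c i) :=
    fun _ => Set.mem_iUnion.mp
  choose! i hi using hindex
  let shift (x : ℕ) : ℕ := x - (b (i x) - a (i x))
  have hshift : ∀ x ∈ ⋃ i, Set.Ioc (b i) (c i), shift x ∈ Set.Ioc (a (i x)) (b (i x)) := by
    intro x hx
    have hxi := hi x hx
    have hleni := hlen (i x)
    simp only [shift, Set.mem_Ioc] at hxi ⊢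
    omega
  refine Nat.cast_le.mpr (Set.ncard_le_ncard_of_injOn shift ?_ ?_)
  · rintro x ⟨hx, -, hxn⟩
    exact ⟨Set.mem_iUnion.mpr ⟨i x, hshift x hx⟩, Nat.one_le_of_lt (hshift x hx).1,
      (Nat.sub_le _ _).trans hxn⟩
  · rintro x ⟨hx, -⟩ y ⟨hy, -⟩ hxy
    have hsame : i x = i y := hdisj.eq (Set.not_disjoint_iff.mpr
      ⟨shift x, hshift x hx, hxy ▸ hshift y hy⟩)
    have hxb := (hi x hx).1
    have hyb := (hi y hy).1
    simp only [shift, hsame] at hxy hxb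
    omega

end Count

section IntervalDensity

/-- The proportion of the interval `(a, b]` occupied by `S`, that is, its probability under the
uniform distribution on `(a, b]`. The junk value for `b ≤ a` is `0`. -/
noncomputable def intervalDensity (a b : ℕ) (S : Set ℕ) : ℝ :=
  (S ∩ Set.Ioc a b).ncard / (b - a)

variable {a b : ℕ} {S : Set ℕ}

lemma intervalDensity_eq_one (hab : a < b) (h : Set.Ioc a b ⊆ S) : intervalDensity a b S = 1 := by
  have hcard : ((Set.Ioc a b).ncard : ℝ) = b - a := by
    rw [← Finset.coe_Ioc, Set.ncard_coe_finset, Nat.card_Ioc, Nat.cast_sub hab.le]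
  rw [intervalDensity, Set.inter_eq_self_of_subset_right h, hcard]
  exact div_self (sub_pos.mpr (Nat.cast_lt.mpr hab)).ne'

lemma intervalDensity_eq_zero (h : Disjoint S (Set.Ioc a b)) : intervalDensity a b S = 0 := by
  rw [intervalDensity, h.inter_eq, Set.ncard_empty, Nat.cast_zero, zero_div]

lemma isFAMeasure_intervalDensity (hab : a < b) : IsFAMeasure (intervalDensity a b) := by
  have hpos : (0 : ℝ) < b - a := sub_pos.mpr (Nat.cast_lt.mpr hab)
  refine ⟨fun S => by unfold intervalDensity; positivity, fun S => ?_,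
    intervalDensity_eq_one hab (Set.subset_univ _), fun S T hST => ?_⟩
  · rw [← intervalDensity_eq_one hab (Set.subset_univ _), intervalDensity, intervalDensity]
    gcongr
    · exact Set.toFinite _
    · exact Set.subset_univ S
  · rw [intervalDensity, Set.union_inter_distrib_right,
      Set.ncard_union_eq (hST.mono Set.inter_subset_left Set.inter_subset_left), Nat.cast_add,
      add_div]
    rfl

lemma HasDensity.tendsto_intervalDensity {ι : Type*} {l : Filter ι} {a b : ι → ℕ} {d : ℝ}
    (h : HasDensity S d) (ha : Tendsto a l atTop) (hab : ∀ᶠ i in l, a i < b i)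
    (hlen : (fun i => (b i : ℝ)) =O[l] fun i => (b i - a i : ℝ)) :
    Tendsto (fun i => intervalDensity (a i) (b i) S) l (𝓝 d) := by
  have hb : Tendsto b l atTop := tendsto_atTop_mono' l (hab.mono fun _ => le_of_lt) ha
  have hle : (fun i => (a i : ℝ)) =O[l] fun i => (b i : ℝ) :=
    .of_norm_eventuallyLE <| hab.mono fun i hi => by simpa using hi.le
  have herror : (fun i => (count S (b i) - d * b i) - (count S (a i) - d * a i))
      =o[l] fun i => (b i - a i : ℝ) :=
    ((h.isLittleO.comp_tendsto hb).trans_isBigO hlen).sub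
      ((h.isLittleO.comp_tendsto ha).trans_isBigO (hle.trans hlen))
  rw [← tendsto_sub_nhds_zero_iff]
  refine herror.tendsto_div_nhds_zero.congr' (hab.mono fun i hi => ?_)
  have hne : (b i - a i : ℝ) ≠ 0 := (sub_pos.mpr (Nat.cast_lt.mpr hi)).ne'
  simp only [intervalDensity, ← count_add_ncard_inter_Ioc_s17 S hi.le]
  field_simp
  ring

end IntervalDensity

section UltrafilterLimit

variable {𝒰 : Ultrafilter ℕ}

lemma ulim_eq_of_tendsto {x : ℕ → ℝ} {L : ℝ} (h : Tendsto x 𝒰 (𝓝 L)) : ulim 𝒰 x = L :=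
  h.limUnder_eq

lemma tendsto_ulim_of_isBounded {x : ℕ → ℝ} (hx : Bornology.IsBounded (Set.range x)) :
    Tendsto x 𝒰 (𝓝 (ulim 𝒰 x)) := by
  obtain ⟨L, -, hL⟩ := hx.isCompact_closure.ultrafilter_le_nhds' (𝒰.map x)
    (mem_map.mpr (univ_mem' fun n => subset_closure (Set.mem_range_self n)))
  exact tendsto_nhds_limUnder ⟨L, hL⟩

variable {ν : ℕ → Set ℕ → ℝ}

lemma IsFAMeasure.tendsto_ulim (hν : ∀ k, IsFAMeasure (ν k)) (S : Set ℕ) :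
    Tendsto (fun k => ν k S) 𝒰 (𝓝 (ulim 𝒰 fun k => ν k S)) :=
  tendsto_ulim_of_isBounded <| (Metric.isBounded_Icc (0 : ℝ) 1).subset <|
    Set.range_subset_iff.mpr fun k => ⟨(hν k).1 S, (hν k).2.1 S⟩

lemma IsFAMeasure.ulim (hν : ∀ k, IsFAMeasure (ν k)) :
    IsFAMeasure fun S => ulim 𝒰 fun k => ν k S := by
  refine ⟨fun S => ?_, fun S => ?_, ?_, fun S T hST => ?_⟩
  · exact ge_of_tendsto' (tendsto_ulim hν S) fun k => (hν k).1 S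
  · exact le_of_tendsto' (tendsto_ulim hν S) fun k => (hν k).2.1 S
  · exact ulim_eq_of_tendsto (tendsto_const_nhds.congr fun k => (hν k).2.2.1.symm)
  · exact ulim_eq_of_tendsto (((tendsto_ulim hν S).add (tendsto_ulim hν T)).congr
      fun k => ((hν k).2.2.2 S T hST).symm)

lemma isDensityMeasure_ulim_intervalDensity {a b : ℕ → ℕ} (ha : Tendsto a 𝒰 atTop)
    (hab : ∀ k, a k < b k) (hlen : (fun k => (b k : ℝ)) =O[𝒰] fun k => (b k - a k : ℝ)) :
    IsDensityMeasure fun S => ulim 𝒰 fun k => intervalDensity (a k) (b k) S :=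
  ⟨.ulim fun k => isFAMeasure_intervalDensity (hab k), fun _ _ hS =>
    ulim_eq_of_tendsto (hS.tendsto_intervalDensity ha (.of_forall hab) hlen)⟩

end UltrafilterLimit

section Triadic

/-- The union of the lower halves `(3 ^ k, 2 * 3 ^ k]` of the triadic blocks
`(3 ^ k, 3 ^ (k + 1)]`; it is the set `B` of the counterexample. -/
def lowerTriadic : Set ℕ := ⋃ k : ℕ, Set.Ioc (3 ^ k) (2 * 3 ^ k)

/-- The union of the upper halves `(2 * 3 ^ k, 3 ^ (k + 1)]` of the triadic blocks
`(3 ^ k, 3 ^ (k + 1)]`; it is the set `A` of the counterexample. -/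
def upperTriadic : Set ℕ := ⋃ k : ℕ, Set.Ioc (2 * 3 ^ k) (3 ^ (k + 1))

/-- The limit along the ultrafilter `𝒰` of the proportions of the windows
`(2 * 3 ^ k, 3 ^ (k + 1)]` occupied by a set. It is a density measure when `𝒰` is nonprincipal. -/
noncomputable def triadicMeasure (𝒰 : Ultrafilter ℕ) (S : Set ℕ) : ℝ :=
  ulim 𝒰 fun k => intervalDensity (2 * 3 ^ k) (3 ^ (k + 1)) S

lemma two_mul_three_pow_lt (k : ℕ) : 2 * 3 ^ k < 3 ^ (k + 1) := by
  rw [pow_succ']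
  gcongr
  norm_num

lemma pairwise_disjoint_triadic_blocks :
    Pairwise (Function.onFun Disjoint fun k : ℕ => Set.Ioc (3 ^ k) (3 ^ (k + 1))) :=
  (pow_right_mono₀ (by norm_num : 1 ≤ 3)).pairwise_disjoint_on_Ioc_succ

lemma Ioc_lower_subset_triadic_block (k : ℕ) :
    Set.Ioc (3 ^ k) (2 * 3 ^ k) ⊆ Set.Ioc (3 ^ k) (3 ^ (k + 1)) :=
  Set.Ioc_subset_Ioc_right (two_mul_three_pow_lt k).le

lemma Ioc_upper_subset_triadic_block (k : ℕ) :
    Set.Ioc (2 * 3 ^ k) (3 ^ (k + 1)) ⊆ Set.Ioc (3 ^ k) (3 ^ (k + 1)) :=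
  Set.Ioc_subset_Ioc_left (Nat.le_mul_of_pos_left _ two_pos)

lemma disjoint_lowerTriadic_Ioc (k : ℕ) :
    Disjoint lowerTriadic (Set.Ioc (2 * 3 ^ k) (3 ^ (k + 1))) := by
  refine Set.disjoint_iUnion_left.mpr fun j => ?_
  rcases eq_or_ne j k with rfl | hjk
  · exact Set.disjoint_left.mpr fun _ h h' => h'.1.not_ge h.2
  · exact (pairwise_disjoint_triadic_blocks hjk).mono
      (Ioc_lower_subset_triadic_block j) (Ioc_upper_subset_triadic_block k)

lemma count_upperTriadic_le_count_lowerTriadic (n : ℕ) :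
    count upperTriadic n ≤ count lowerTriadic n := by
  refine count_iUnion_Ioc_le (fun k => ?_) (fun i j hij => ?_) n
  · rw [pow_succ]
    omega
  · exact (pairwise_disjoint_triadic_blocks hij).mono
      (Ioc_lower_subset_triadic_block i) (Ioc_lower_subset_triadic_block j)

variable (𝒰 : Ultrafilter ℕ)

lemma triadicMeasure_upperTriadic : triadicMeasure 𝒰 upperTriadic = 1 :=
  ulim_eq_of_tendsto <| tendsto_const_nhds.congr fun k =>
    (intervalDensity_eq_one (two_mul_three_pow_lt k) (Set.subset_iUnion_of_subset k le_rfl)).symm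

lemma triadicMeasure_lowerTriadic : triadicMeasure 𝒰 lowerTriadic = 0 :=
  ulim_eq_of_tendsto <| tendsto_const_nhds.congr fun k =>
    (intervalDensity_eq_zero (disjoint_lowerTriadic_Ioc k)).symm

variable {𝒰}

lemma isDensityMeasure_triadicMeasure (h𝒰 : (𝒰 : Filter ℕ) ≤ atTop) :
    IsDensityMeasure (triadicMeasure 𝒰) := by
  have hlower : Tendsto (fun k : ℕ => 2 * 3 ^ k) atTop (atTop : Filter ℕ) :=
    (tendsto_pow_atTop_atTop_of_one_lt (by norm_num)).const_mul_atTop' (by norm_num)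
  refine isDensityMeasure_ulim_intervalDensity (hlower.mono_left h𝒰) two_mul_three_pow_lt ?_
  have hratio (k : ℕ) : ((3 ^ (k + 1) : ℕ) : ℝ) =
      3 * ((3 ^ (k + 1) : ℕ) - (2 * 3 ^ k : ℕ)) := by
    push_cast
    ring
  exact (isBigO_const_mul_self (3 : ℝ) _ _).congr_left fun k => (hratio k).symm

end Triadic

/-- Counterexample to monotonicity (question (a) of Šalát and Tijdeman):
there are a density measure `μ` and sets `A, B ⊆ ℕ` with `A(n) ≤ B(n)` for all
`n`, yet `μ(A) > μ(B)`. -/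
theorem exists_densityMeasure_not_monotone :
    ∃ (μ : Set ℕ → ℝ) (A B : Set ℕ),
      IsDensityMeasure μ ∧ (∀ n : ℕ, count A n ≤ count B n) ∧ μ B < μ A := by
  refine ⟨triadicMeasure (hyperfilter ℕ), upperTriadic, lowerTriadic,
    isDensityMeasure_triadicMeasure Nat.hyperfilter_le_atTop,
    count_upperTriadic_le_count_lowerTriadic, ?_⟩
  rw [triadicMeasure_upperTriadic, triadicMeasure_lowerTriadic]
  exact zero_lt_one
end
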